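/- arXiv:2306.01909 — 3 statements merged into one kernel-verified Lean document; each statement's English description precedes it below -/
import Mathlib

section
/- Let A₁ and A₂ be unital C*-algebras over ℂ, let ω₁ be a state on A₁ and ω₂ a state on A₂. Then for all self-adjoint elements A, A' ∈ A₁ and B, B' ∈ A₂ with ‖A‖ ≤ 1, ‖A'‖ ≤ 1, ‖B‖ ≤ 1, ‖B'‖ ≤ 1, one has |ω₁(A) * (ω₂(B) - ω₂(B'))| + |ω₁(A') * (ω₂(B) + ω₂(B'))| ≤ 2. -/
/-- A state on a unital complex C*-algebra (or more generally a unital complex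
star algebra): a `ℂ`-linear functional sending `1` to `1` and taking
nonnegative real values on elements of the form `star a * a`. -/
def IsState {A : Type*} [Ring A] [StarRing A] [Algebra ℂ A]
    (φ : A →ₗ[ℂ] ℂ) : Prop :=
  φ 1 = 1 ∧ ∀ a : A, 0 ≤ (φ (star a * a)).re ∧ (φ (star a * a)).im = 0

/-!
Positivity on `star (1 + a) * (1 + a)` makes a state real on self-adjoint `a`; positivity on
`‖a‖ - a` then bounds it by the norm there, and rotating by a phase and taking real parts extends
the bound to all elements. So `y = ω₂ B` and `y' = ω₂ B'` lie in `[-1, 1]`, `ω₁ A` and `ω₁ A'` have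
modulus at most `1`, and `|y - y'| + |y + y'| = 2 max(|y|, |y'|) ≤ 2`.
-/

open scoped ComplexStarModule

lemma abs_sub_add_abs_add_eq_two_nsmul_max {G : Type*} [AddCommGroup G] [LinearOrder G]
    [IsOrderedAddMonoid G] (x y : G) : |x - y| + |x + y| = 2 • max |x| |y| := by
  grind

namespace IsState

section StarAlgebra

variable {A : Type*} [Ring A] [StarRing A] [Algebra ℂ A] {φ : A →ₗ[ℂ] ℂ} {a b : A}

lemma im_apply_eq_zero (hφ : IsState φ) (ha : IsSelfAdjoint a) : (φ a).im = 0 := by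
  have expansion : star (1 + a) * (1 + a) = 1 + (a + a) + star a * a := by
    rw [star_add, star_one, ha.star_eq]
    noncomm_ring
  have h := (hφ.2 (1 + a)).2
  simp only [expansion, map_add, hφ.1, Complex.add_im, Complex.one_im, (hφ.2 a).2] at h
  linarith

lemma norm_sub_add_norm_add_eq (hφ : IsState φ) (ha : IsSelfAdjoint a) (hb : IsSelfAdjoint b) :
    ‖φ a - φ b‖ + ‖φ a + φ b‖ = 2 * max ‖φ a‖ ‖φ b‖ := by
  lift φ a to ℝ using hφ.im_apply_eq_zero ha with x
  lift φ b to ℝ using hφ.im_apply_eq_zero hb with y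
  norm_cast
  simp only [Real.norm_eq_abs, abs_sub_add_abs_add_eq_two_nsmul_max, nsmul_eq_mul, Nat.cast_ofNat]

lemma re_apply_realPart [StarModule ℂ A] (hφ : IsState φ) (a : A) :
    (φ (ℜ a : A)).re = (φ a).re := by
  conv_rhs => rw [← realPart_add_I_smul_imaginaryPart a]
  simp [hφ.im_apply_eq_zero (ℑ a).2]

end StarAlgebra

section CStarAlgebra

variable {A : Type*} [CStarAlgebra A] {φ : A →ₗ[ℂ] ℂ}

lemma re_apply_le_norm_of_isSelfAdjoint (hφ : IsState φ) {a : A} (ha : IsSelfAdjoint a) :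
    (φ a).re ≤ ‖a‖ := by
  let : PartialOrder A := CStarAlgebra.spectralOrder A
  have : StarOrderedRing A := CStarAlgebra.spectralOrderedRing A
  obtain ⟨b, hb⟩ := CStarAlgebra.nonneg_iff_eq_star_mul_self.mp
    (sub_nonneg.mpr ha.le_algebraMap_norm_self)
  have h : 0 ≤ (φ (algebraMap ℝ A ‖a‖ - a)).re := hb ▸ (hφ.2 b).1
  simpa [Algebra.algebraMap_eq_smul_one, φ.map_smul_of_tower, hφ.1] using h

lemma re_apply_le_norm (hφ : IsState φ) (a : A) : (φ a).re ≤ ‖a‖ :=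
  calc (φ a).re = (φ (ℜ a : A)).re := (hφ.re_apply_realPart a).symm
    _ ≤ ‖(ℜ a : A)‖ := hφ.re_apply_le_norm_of_isSelfAdjoint (ℜ a).2
    _ ≤ ‖a‖ := realPart.norm_le a

lemma norm_apply_le (hφ : IsState φ) (a : A) : ‖φ a‖ ≤ ‖a‖ := by
  obtain ⟨c, hc, hca⟩ := Complex.exists_norm_eq_mul_self (φ a)
  calc ‖φ a‖ = (φ (c • a)).re := by rw [map_smul, smul_eq_mul, ← hca]; simp
    _ ≤ ‖c • a‖ := hφ.re_apply_le_norm (c • a)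
    _ = ‖a‖ := by rw [norm_smul, hc, one_mul]

end CStarAlgebra

end IsState

theorem product_state_satisfies_bell_inequalities_general
    {A₁ : Type*} [CStarAlgebra A₁] {A₂ : Type*} [CStarAlgebra A₂]
    {ω₁ : A₁ →ₗ[ℂ] ℂ} (hω₁ : IsState ω₁) {ω₂ : A₂ →ₗ[ℂ] ℂ} (hω₂ : IsState ω₂)
    {A A' : A₁} {B B' : A₂} (hB : IsSelfAdjoint B) (hB' : IsSelfAdjoint B')
    (hAn : ‖A‖ ≤ 1) (hA'n : ‖A'‖ ≤ 1) (hBn : ‖B‖ ≤ 1) (hB'n : ‖B'‖ ≤ 1) :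
    ‖ω₁ A * (ω₂ B - ω₂ B')‖ + ‖ω₁ A' * (ω₂ B + ω₂ B')‖ ≤ 2 :=
  calc ‖ω₁ A * (ω₂ B - ω₂ B')‖ + ‖ω₁ A' * (ω₂ B + ω₂ B')‖
      = ‖ω₁ A‖ * ‖ω₂ B - ω₂ B'‖ + ‖ω₁ A'‖ * ‖ω₂ B + ω₂ B'‖ := by rw [norm_mul, norm_mul]
    _ ≤ 1 * ‖ω₂ B - ω₂ B'‖ + 1 * ‖ω₂ B + ω₂ B'‖ := by
        gcongr
        exacts [(hω₁.norm_apply_le A).trans hAn, (hω₁.norm_apply_le A').trans hA'n]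
    _ = 2 * max ‖ω₂ B‖ ‖ω₂ B'‖ := by rw [one_mul, one_mul, hω₂.norm_sub_add_norm_add_eq hB hB']
    _ ≤ 2 * 1 := by
        gcongr
        exact max_le ((hω₂.norm_apply_le B).trans hBn) ((hω₂.norm_apply_le B').trans hB'n)
    _ = 2 := mul_one 2

/-- Baez's proposition: the correlation values of a product state
`ω(A ⊗ B) = ω₁(A) ω₂(B)` satisfy the Bell inequalities. -/
theorem product_state_satisfies_bell_inequalities
    {A₁ : Type*} [CStarAlgebra A₁] {A₂ : Type*} [CStarAlgebra A₂]
    (ω₁ : A₁ →ₗ[ℂ] ℂ) (hω₁ : IsState ω₁)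
    (ω₂ : A₂ →ₗ[ℂ] ℂ) (hω₂ : IsState ω₂)
    (A A' : A₁) (B B' : A₂)
    (hA : IsSelfAdjoint A) (hA' : IsSelfAdjoint A')
    (hB : IsSelfAdjoint B) (hB' : IsSelfAdjoint B')
    (hAn : ‖A‖ ≤ 1) (hA'n : ‖A'‖ ≤ 1) (hBn : ‖B‖ ≤ 1) (hB'n : ‖B'‖ ≤ 1) :
    ‖ω₁ A * (ω₂ B - ω₂ B')‖ + ‖ω₁ A' * (ω₂ B + ω₂ B')‖ ≤ 2 :=
  product_state_satisfies_bell_inequalities_general hω₁ hω₂ hB hB' hAn hA'n hBn hB'n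
end

section
/- There exist self-adjoint 2×2 complex matrices A, A', B, B', each of operator (spectral) norm at most 1, and a unit vector ψ ∈ ℂ² ⊗ ℂ² (i.e. a function ψ : Fin 2 × Fin 2 → ℂ with ∑ |ψ(i,j)|² = 1), such that |⟨ψ, (A ⊗ₖ (B - B')) ψ⟩| + |⟨ψ, (A' ⊗ₖ (B + B')) ψ⟩| = 2 * Real.sqrt 2, where ⊗ₖ denotes the Kronecker product of matrices (so that A ⊗ₖ C is a 4×4 matrix indexed by Fin 2 × Fin 2) and ⟨·,·⟩ is the standard inner product on ℂ^(Fin 2 × Fin 2). -/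
open scoped Matrix.Norms.L2Operator Kronecker
open Matrix

/-!
In the singlet state the correlation of `A` and `B` is `tr (B * adjugate A) / 2`, which is
`-tr (B * A) / 2` for traceless `A`. Anticommuting self-adjoint involutions `A`, `A'` are
traceless, and `B = (A + A') / √2`, `B' = (A' - A) / √2` are again self-adjoint involutions. Since
`B - B' = √2 A` and `B + B' = √2 A'`, each of the two correlations has modulus `√2`.
-/

namespace BohmBell

theorem norm_eq_one_of_isSelfAdjoint_of_mul_self_eq_one {E : Type*} [NormedRing E] [StarRing E]
    [CStarRing E] [Nontrivial E] {a : E} (ha : IsSelfAdjoint a) (h : a * a = 1) : ‖a‖ = 1 :=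
  CStarRing.norm_of_mem_unitary <| Unitary.mem_iff.mpr ⟨by rwa [ha.star_eq], by rwa [ha.star_eq]⟩

theorem smul_add_smul_mul_self_of_anticommute {R S : Type*} [CommSemiring R] [Ring S]
    [Algebra R S] {a b : S} (ha : a * a = 1) (hb : b * b = 1) (hab : a * b = -(b * a)) (r s : R) :
    (r • a + s • b) * (r • a + s • b) = (r * r + s * s) • (1 : S) := by
  simp only [add_mul, mul_add, smul_mul_smul_comm, ha, hb, hab, smul_neg, mul_comm s r, add_smul]
  abel

theorem norm_smul_add_smul_of_anticommute {E : Type*} [NormedRing E] [StarRing E] [CStarRing E]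
    [Nontrivial E] [Algebra ℝ E] [StarModule ℝ E] {a b : E} (ha : IsSelfAdjoint a)
    (hb : IsSelfAdjoint b) (haa : a * a = 1) (hbb : b * b = 1) (hab : a * b = -(b * a)) {r s : ℝ}
    (hrs : r * r + s * s = 1) : ‖r • a + s • b‖ = 1 := by
  refine norm_eq_one_of_isSelfAdjoint_of_mul_self_eq_one (((IsSelfAdjoint.all r).smul ha).add
    ((IsSelfAdjoint.all s).smul hb)) ?_
  rw [smul_add_smul_mul_self_of_anticommute haa hbb hab, hrs, one_smul]

theorem trace_eq_zero_of_anticommute {n R : Type*} [Fintype n] [DecidableEq n] [CommRing R]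
    [IsAddTorsionFree R] {A U : Matrix n n R} (hU : U * U = 1) (h : A * U = -(U * A)) :
    A.trace = 0 := by
  refine self_eq_neg.mp ?_
  calc A.trace = (A * U * U).trace := by rw [mul_assoc, hU, mul_one]
    _ = -(U * A * U).trace := by rw [h, neg_mul, trace_neg]
    _ = -A.trace := by rw [trace_mul_cycle, hU, one_mul]

theorem star_vec_dotProduct_kronecker_mulVec_vec {m n R : Type*} [Fintype m] [Fintype n]
    [CommSemiring R] [Star R] (A : Matrix n n R) (B : Matrix m m R) (X : Matrix m n R) :
    star (vec X) ⬝ᵥ (A ⊗ₖ B) *ᵥ vec X = (B * (X * Aᵀ * Xᴴ)).trace := by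
  rw [kronecker_mulVec_vec, star_vec_dotProduct_vec, trace_mul_comm]
  simp only [Matrix.mul_assoc]

theorem symplectic_mul_transpose_mul_eq_adjugate {R : Type*} [CommRing R]
    (A : Matrix (Fin 2) (Fin 2) R) :
    !![0, -1; 1, 0] * Aᵀ * !![0, 1; -1, 0] = A.adjugate := by
  rw [eta_fin_two Aᵀ, adjugate_fin_two]
  simp

theorem adjugate_eq_neg_of_trace_eq_zero {R : Type*} [CommRing R]
    {A : Matrix (Fin 2) (Fin 2) R} (hA : A.trace = 0) : A.adjugate = -A := by
  have hdiag : A 0 0 = -A 1 1 := eq_neg_of_add_eq_zero_left (by rwa [← trace_fin_two])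
  ext i j
  fin_cases i <;> fin_cases j <;> simp [adjugate_fin_two, hdiag]

/-- The singlet vector `(e₀ ⊗ e₁ - e₁ ⊗ e₀) / √2` of `ℂ² ⊗ ℂ²`, whose vector state violates the
Bell inequality. It is the vectorization of a `2 × 2` matrix; `vec` stacks columns, so its
entry at `(i, j)` is the matrix entry `j i`. -/
noncomputable def singlet : Fin 2 × Fin 2 → ℂ :=
  vec ((√2)⁻¹ • !![0, -1; 1, 0])

theorem sum_norm_singlet_sq : ∑ p, ‖singlet p‖ ^ 2 = 1 := by
  norm_num [Fintype.sum_prod_type, singlet]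

theorem singlet_correlation (A B : Matrix (Fin 2) (Fin 2) ℂ) :
    star singlet ⬝ᵥ (A ⊗ₖ B) *ᵥ singlet = (B * A.adjugate).trace / 2 := by
  have hJ : (!![0, -1; 1, 0] : Matrix (Fin 2) (Fin 2) ℂ)ᴴ = !![0, 1; -1, 0] := by
    ext i j
    fin_cases i <;> fin_cases j <;> simp
  have hs : (√2)⁻¹ * (√2)⁻¹ = (2 : ℝ)⁻¹ := by
    rw [← mul_inv, Real.mul_self_sqrt zero_le_two]
  rw [singlet, star_vec_dotProduct_kronecker_mulVec_vec, conjTranspose_smul, hJ, star_trivial,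
    smul_mul, smul_mul_smul_comm, hs, symplectic_mul_transpose_mul_eq_adjugate, Matrix.mul_smul,
    trace_smul, Complex.real_smul, Complex.ofReal_inv, Complex.ofReal_ofNat, inv_mul_eq_div]

theorem singlet_correlation_smul_self {A : Matrix (Fin 2) (Fin 2) ℂ} (hA : A * A = 1)
    (htr : A.trace = 0) (r : ℝ) : star singlet ⬝ᵥ (A ⊗ₖ (r • A)) *ᵥ singlet = -r := by
  rw [singlet_correlation, adjugate_eq_neg_of_trace_eq_zero htr, mul_neg, smul_mul, hA, trace_neg,
    trace_smul, trace_one, Complex.real_smul, Fintype.card_fin, Nat.cast_ofNat, neg_div,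
    mul_div_cancel_right₀ _ two_ne_zero]

theorem norm_singlet_correlation_add_norm_of_anticommute {A A' : Matrix (Fin 2) (Fin 2) ℂ}
    (hA : A * A = 1) (hA' : A' * A' = 1) (hAA' : A * A' = -(A' * A)) (r s : ℝ) :
    ‖star singlet ⬝ᵥ (A ⊗ₖ ((r • A + s • A') - (-r • A + s • A'))) *ᵥ singlet‖ +
      ‖star singlet ⬝ᵥ (A' ⊗ₖ ((r • A + s • A') + (-r • A + s • A'))) *ᵥ singlet‖ =
        2 * (|r| + |s|) := by
  have hsub : (r • A + s • A') - (-r • A + s • A') = (2 * r) • A := by module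
  have hadd : (r • A + s • A') + (-r • A + s • A') = (2 * s) • A' := by module
  have hA'A : A' * A = -(A * A') := by rw [hAA', neg_neg]
  rw [hsub, hadd, singlet_correlation_smul_self hA (trace_eq_zero_of_anticommute hA' hAA'),
    singlet_correlation_smul_self hA' (trace_eq_zero_of_anticommute hA hA'A), norm_neg, norm_neg,
    Complex.norm_real, Complex.norm_real, norm_mul, norm_mul, Real.norm_ofNat, Real.norm_eq_abs,
    Real.norm_eq_abs, mul_add]

/-- The Pauli matrix `σ_x`, the spin observable along the `x` axis, used as `A'`. -/
def pauliX : Matrix (Fin 2) (Fin 2) ℂ := !![0, 1; 1, 0]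

/-- The Pauli matrix `σ_z`, the spin observable along the `z` axis, used as `A`. -/
def pauliZ : Matrix (Fin 2) (Fin 2) ℂ := !![1, 0; 0, -1]

theorem isHermitian_pauliX : pauliX.IsHermitian := by
  ext i j
  fin_cases i <;> fin_cases j <;> simp [pauliX]

theorem isHermitian_pauliZ : pauliZ.IsHermitian := by
  ext i j
  fin_cases i <;> fin_cases j <;> simp [pauliZ]

theorem pauliX_mul_self : pauliX * pauliX = 1 := by
  simp [pauliX, one_fin_two]

theorem pauliZ_mul_self : pauliZ * pauliZ = 1 := by
  simp [pauliZ, one_fin_two]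

theorem pauliZ_mul_pauliX : pauliZ * pauliX = -(pauliX * pauliZ) := by
  simp [pauliX, pauliZ]

theorem isHermitian_smul_pauliZ_add_smul_pauliX (r s : ℝ) :
    (r • pauliZ + s • pauliX).IsHermitian :=
  ((IsSelfAdjoint.all r).smul isHermitian_pauliZ).add
    ((IsSelfAdjoint.all s).smul isHermitian_pauliX)

theorem norm_smul_pauliZ_add_smul_pauliX {r s : ℝ} (hrs : r * r + s * s = 1) :
    ‖r • pauliZ + s • pauliX‖ = 1 :=
  norm_smul_add_smul_of_anticommute isHermitian_pauliZ isHermitian_pauliX pauliZ_mul_self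
    pauliX_mul_self pauliZ_mul_pauliX hrs

end BohmBell

open BohmBell in
/-- The Bohm–Bell situation: there exist self-adjoint `2 × 2` complex matrices of
operator (spectral) norm at most `1` and a unit vector `ψ ∈ ℂ² ⊗ ℂ²` whose
vector state attains the maximal violation `2√2` of the Bell inequality. -/
theorem bell_inequality_maximal_violation :
    ∃ (A A' B B' : Matrix (Fin 2) (Fin 2) ℂ) (ψ : Fin 2 × Fin 2 → ℂ),
      A.IsHermitian ∧ A'.IsHermitian ∧ B.IsHermitian ∧ B'.IsHermitian ∧
      ‖A‖ ≤ 1 ∧ ‖A'‖ ≤ 1 ∧ ‖B‖ ≤ 1 ∧ ‖B'‖ ≤ 1 ∧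
      (∑ p : Fin 2 × Fin 2, ‖ψ p‖ ^ 2) = 1 ∧
      ‖star ψ ⬝ᵥ ((A ⊗ₖ (B - B')).mulVec ψ)‖ +
          ‖star ψ ⬝ᵥ ((A' ⊗ₖ (B + B')).mulVec ψ)‖ =
        2 * Real.sqrt 2 := by
  have hsq : √2 / 2 * (√2 / 2) + √2 / 2 * (√2 / 2) = 1 := by
    linear_combination Real.mul_self_sqrt zero_le_two / 2
  refine ⟨pauliZ, pauliX, (√2 / 2) • pauliZ + (√2 / 2) • pauliX,
    -(√2 / 2) • pauliZ + (√2 / 2) • pauliX, singlet, isHermitian_pauliZ, isHermitian_pauliX,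
    isHermitian_smul_pauliZ_add_smul_pauliX _ _, isHermitian_smul_pauliZ_add_smul_pauliX _ _,
    (norm_eq_one_of_isSelfAdjoint_of_mul_self_eq_one isHermitian_pauliZ pauliZ_mul_self).le,
    (norm_eq_one_of_isSelfAdjoint_of_mul_self_eq_one isHermitian_pauliX pauliX_mul_self).le,
    (norm_smul_pauliZ_add_smul_pauliX hsq).le,
    (norm_smul_pauliZ_add_smul_pauliX (by rwa [neg_mul_neg])).le,
    sum_norm_singlet_sq, ?_⟩
  rw [norm_singlet_correlation_add_norm_of_anticommute pauliZ_mul_self pauliX_mul_self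
    pauliZ_mul_pauliX, abs_of_nonneg (by positivity), add_halves]
end

section
/- Let n, m be positive natural numbers, let u ∈ ℂⁿ and v ∈ ℂᵐ be unit vectors, and define ψ : Fin n × Fin m → ℂ by ψ(i,j) = u(i) * v(j). Then for all self-adjoint matrices A, A' ∈ M_n(ℂ) and B, B' ∈ M_m(ℂ), each of operator (spectral) norm at most 1, one has |⟨ψ, (A ⊗ₖ (B - B')) ψ⟩| + |⟨ψ, (A' ⊗ₖ (B + B')) ψ⟩| ≤ 2, where ⊗ₖ denotes the Kronecker product of matrices and ⟨·,·⟩ is the standard inner product on ℂ^(Fin n × Fin m). -/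
open scoped Matrix.Norms.L2Operator Kronecker
open Matrix

/-!
In the state of a product vector `u ⊗ v` the expectation of `A ⊗ₖ B` is the product of the
expectation `a` of `A` at `u` and the expectation `b` of `B` at `v`. Hence the left-hand side of
the Bell inequality is `‖a‖ ‖b - b'‖ + ‖a'‖ ‖b + b'‖ ≤ ‖b - b'‖ + ‖b + b'‖`. As `B` and `B'` are
Hermitian, `b` and `b'` are real, and for real numbers `|b - b'| + |b + b'| = 2 max |b| |b'|`.
-/

section ProductVector

variable {R ι κ : Type*}

/-- The product vector `u ⊗ v`, with coordinates indexed by pairs as in the Kronecker product of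
matrices. -/
def productVector [Mul R] (u : ι → R) (v : κ → R) : ι × κ → R :=
  fun p => u p.1 * v p.2

theorem star_productVector [CommMagma R] [StarMul R] (u : ι → R) (v : κ → R) :
    star (productVector u v) = productVector (star u) (star v) :=
  funext fun p => star_mul' (u p.1) (v p.2)

theorem productVector_dotProduct_productVector [NonUnitalCommSemiring R] [Fintype ι] [Fintype κ]
    (u w : ι → R) (v x : κ → R) :
    productVector u v ⬝ᵥ productVector w x = (u ⬝ᵥ w) * (v ⬝ᵥ x) := by
  simp only [dotProduct, productVector, Fintype.sum_mul_sum, Fintype.sum_prod_type,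
    mul_mul_mul_comm]

theorem kronecker_mulVec_productVector [NonUnitalCommSemiring R] [Fintype ι] [Fintype κ]
    {ι' κ' : Type*} (A : Matrix ι' ι R) (B : Matrix κ' κ R) (u : ι → R) (v : κ → R) :
    (A ⊗ₖ B) *ᵥ productVector u v = productVector (A *ᵥ u) (B *ᵥ v) :=
  funext fun p => productVector_dotProduct_productVector (A p.1) u (B p.2) v

end ProductVector

section VectorState

variable {R ι κ : Type*} [Fintype ι] [Fintype κ]

/-- The functional `A ↦ ⟨u, A u⟩` on matrices. It is the vector state of `u` when `u` is a unit
vector; no normalization is built in. -/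
def vectorState [CommSemiring R] [Star R] (u : ι → R) : Matrix ι ι R →ₗ[R] R where
  toFun A := star u ⬝ᵥ (A *ᵥ u)
  map_add' A B := by rw [add_mulVec, dotProduct_add]
  map_smul' c A := by rw [smul_mulVec, dotProduct_smul, RingHom.id_apply]

theorem vectorState_apply [CommSemiring R] [Star R] (u : ι → R) (A : Matrix ι ι R) :
    vectorState u A = star u ⬝ᵥ (A *ᵥ u) :=
  rfl

theorem vectorState_productVector_kronecker [CommSemiring R] [StarMul R]
    (u : ι → R) (v : κ → R) (A : Matrix ι ι R) (B : Matrix κ κ R) :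
    vectorState (productVector u v) (A ⊗ₖ B) = vectorState u A * vectorState v B := by
  simp only [vectorState_apply, star_productVector, kronecker_mulVec_productVector,
    productVector_dotProduct_productVector]

theorem isSelfAdjoint_vectorState [CommSemiring R] [StarRing R] {A : Matrix ι ι R}
    (hA : A.IsHermitian) (u : ι → R) : IsSelfAdjoint (vectorState u A) := by
  rw [isSelfAdjoint_iff, vectorState_apply, ← star_dotProduct, star_mulVec, hA.eq,
    dotProduct_mulVec]

theorem norm_vectorState_le {𝕜 : Type*} [RCLike 𝕜] [DecidableEq ι] (u : ι → 𝕜)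
    (A : Matrix ι ι 𝕜) : ‖vectorState u A‖ ≤ ‖A‖ * ∑ i, ‖u i‖ ^ 2 := by
  let x : EuclideanSpace 𝕜 ι := WithLp.toLp 2 u
  have inner_eq : inner 𝕜 x (WithLp.toLp 2 (A *ᵥ u)) = vectorState u A := by
    rw [EuclideanSpace.inner_toLp_toLp, dotProduct_comm, vectorState_apply]
  calc ‖vectorState u A‖
      ≤ ‖x‖ * ‖WithLp.toLp 2 (A *ᵥ u)‖ := inner_eq ▸ norm_inner_le_norm _ _
    _ ≤ ‖x‖ * (‖A‖ * ‖x‖) := by gcongr; exact A.l2_opNorm_mulVec x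
    _ = ‖A‖ * ‖x‖ ^ 2 := by ring
    _ = ‖A‖ * ∑ i, ‖u i‖ ^ 2 := by rw [EuclideanSpace.norm_sq_eq]

theorem norm_vectorState_le_one {𝕜 : Type*} [RCLike 𝕜] [DecidableEq ι] {u : ι → 𝕜}
    (hu : ∑ i, ‖u i‖ ^ 2 ≤ 1) {A : Matrix ι ι 𝕜} (hA : ‖A‖ ≤ 1) : ‖vectorState u A‖ ≤ 1 :=
  (norm_vectorState_le u A).trans (mul_le_one₀ hA (by positivity) hu)

end VectorState

theorem abs_sub_add_abs_add_eq_two_mul_max {R : Type*} [CommRing R] [LinearOrder R]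
    [IsStrictOrderedRing R] (b b' : R) : |b - b'| + |b + b'| = 2 * max |b| |b'| := by
  grind

theorem norm_sub_add_norm_add_of_isSelfAdjoint {𝕜 : Type*} [RCLike 𝕜] {b b' : 𝕜}
    (hb : IsSelfAdjoint b) (hb' : IsSelfAdjoint b') :
    ‖b - b'‖ + ‖b + b'‖ = 2 * max ‖b‖ ‖b'‖ := by
  obtain ⟨r, rfl⟩ := RCLike.conj_eq_iff_real.mp hb
  obtain ⟨r', rfl⟩ := RCLike.conj_eq_iff_real.mp hb'
  rw [← RCLike.ofReal_sub, ← RCLike.ofReal_add]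
  simpa only [RCLike.norm_ofReal] using abs_sub_add_abs_add_eq_two_mul_max r r'

theorem product_vector_state_satisfies_bell_inequalities_general {𝕜 ι κ : Type*} [RCLike 𝕜]
    [Fintype ι] [DecidableEq ι] [Fintype κ] [DecidableEq κ]
    {u : ι → 𝕜} (hu : ∑ i, ‖u i‖ ^ 2 ≤ 1) {v : κ → 𝕜} (hv : ∑ j, ‖v j‖ ^ 2 ≤ 1)
    {A A' : Matrix ι ι 𝕜} {B B' : Matrix κ κ 𝕜} (hB : B.IsHermitian) (hB' : B'.IsHermitian)
    (hAn : ‖A‖ ≤ 1) (hA'n : ‖A'‖ ≤ 1) (hBn : ‖B‖ ≤ 1) (hB'n : ‖B'‖ ≤ 1) :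
    ‖vectorState (productVector u v) (A ⊗ₖ (B - B'))‖ +
        ‖vectorState (productVector u v) (A' ⊗ₖ (B + B'))‖ ≤ 2 := by
  simp only [vectorState_productVector_kronecker, map_sub, map_add, norm_mul]
  set b := vectorState v B
  set b' := vectorState v B'
  calc ‖vectorState u A‖ * ‖b - b'‖ + ‖vectorState u A'‖ * ‖b + b'‖
      ≤ 1 * ‖b - b'‖ + 1 * ‖b + b'‖ := by
        gcongr
        · exact norm_vectorState_le_one hu hAn
        · exact norm_vectorState_le_one hu hA'n
    _ = 2 * max ‖b‖ ‖b'‖ := by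
        rw [one_mul, one_mul, norm_sub_add_norm_add_of_isSelfAdjoint
          (isSelfAdjoint_vectorState hB v) (isSelfAdjoint_vectorState hB' v)]
    _ ≤ 2 * 1 := by
        gcongr
        exact max_le (norm_vectorState_le_one hv hBn) (norm_vectorState_le_one hv hB'n)
    _ = 2 := mul_one 2

/-- The vector state of a product vector `ψ = u ⊗ v` on
`M_n(ℂ) ⊗ M_m(ℂ)` (realized via the Kronecker product) is a product state, and
hence satisfies the Bell bound `2`. -/
theorem product_vector_state_satisfies_bell_inequalities
    (n m : ℕ) (hn : 0 < n) (hm : 0 < m)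
    (u : Fin n → ℂ) (hu : (∑ i, ‖u i‖ ^ 2) = 1)
    (v : Fin m → ℂ) (hv : (∑ j, ‖v j‖ ^ 2) = 1)
    (ψ : Fin n × Fin m → ℂ) (hψ : ∀ p : Fin n × Fin m, ψ p = u p.1 * v p.2)
    (A A' : Matrix (Fin n) (Fin n) ℂ) (B B' : Matrix (Fin m) (Fin m) ℂ)
    (hA : A.IsHermitian) (hA' : A'.IsHermitian)
    (hB : B.IsHermitian) (hB' : B'.IsHermitian)
    (hAn : ‖A‖ ≤ 1) (hA'n : ‖A'‖ ≤ 1) (hBn : ‖B‖ ≤ 1) (hB'n : ‖B'‖ ≤ 1) :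
    ‖star ψ ⬝ᵥ ((A ⊗ₖ (B - B')).mulVec ψ)‖ +
        ‖star ψ ⬝ᵥ ((A' ⊗ₖ (B + B')).mulVec ψ)‖ ≤ 2 := by
  obtain rfl : ψ = productVector u v := funext hψ
  exact product_vector_state_satisfies_bell_inequalities_general hu.le hv.le hB hB'
    hAn hA'n hBn hB'n
end
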